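/- Let F be a field of characteristic zero, let J = J(V,f) be the Jordan superalgebra of a nondegenerate supersymmetric bilinear superform, and let t ∈ F with t ≠ 1. Then there do not exist nonzero elements e₁, e₂ in the even part of J with e₁∘e₁ = e₁, e₂∘e₂ = e₂, e₁∘e₂ = 0, and elements x, y ∈ V₁, such that eᵢ∘x = x/2 and eᵢ∘y = y/2 for i = 1,2 and x∘y = e₁ + t·e₂. (In other words, J(V,f) contains no copy of the superalgebra D_t for t ≠ 1.) -/

import Mathlib

/-!
Write `u = u.1 · 1 + u.2` with `u.2 ∈ V = V₀ ⊕ V₁`. If `x = 0` then `e₁ = -t e₂`, so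
`e₁ = e₁ ∘ e₁ = -t (e₁ ∘ e₂) = 0`. If `x ≠ 0` then `eᵢ ∘ x = x / 2` forces both scalar parts to be
`1 / 2`, whence `e₁ ∘ e₂ = 0` forces `e₁.2 + e₂.2 = 0`. But `x ∘ y` is a scalar, so also
`e₁.2 + t e₂.2 = 0`; as `t ≠ 1`, `e₁` is the scalar `1 / 2`, which is not idempotent.
-/

namespace JVF

variable (F : Type*) [Field F]
variable (V0 V1 : Type*) [AddCommGroup V0] [Module F V0] [AddCommGroup V1] [Module F V1]

/-- The product of the Jordan superalgebra `J(V,f) = F·1 ⊕ V₀ ⊕ V₁` of a supersymmetric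
bilinear superform (`f = f0 ⊥ f1`, `f0` on `V₀`, `f1` on `V₁`), realized on
`F × V0 × V1`:  `(α·1 + v)∘(β·1 + w) = (αβ + f(v,w))·1 + αw + βv`. -/
def jvf (f0 : V0 →ₗ[F] V0 →ₗ[F] F) (f1 : V1 →ₗ[F] V1 →ₗ[F] F)
    (u v : F × V0 × V1) : F × V0 × V1 :=
  (u.1 * v.1 + f0 u.2.1 v.2.1 + f1 u.2.2 v.2.2,
   u.1 • v.2.1 + v.1 • u.2.1,
   u.1 • v.2.2 + v.1 • u.2.2)

section

variable {F V0 V1} {f0 : V0 →ₗ[F] V0 →ₗ[F] F} {f1 : V1 →ₗ[F] V1 →ₗ[F] F}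

theorem snd_jvf (u v : F × V0 × V1) :
    (jvf F V0 V1 f0 f1 u v).2 = u.1 • v.2 + v.1 • u.2 :=
  rfl

theorem fst_jvf_of_snd_eq_zero {u : F × V0 × V1} (hu : u.2 = 0) (v : F × V0 × V1) :
    (jvf F V0 V1 f0 f1 u v).1 = u.1 * v.1 := by
  simp [jvf, hu]

theorem zero_jvf (v : F × V0 × V1) : jvf F V0 V1 f0 f1 0 v = 0 := by
  simp [jvf]

theorem jvf_smul (c : F) (u v : F × V0 × V1) :
    jvf F V0 V1 f0 f1 u (c • v) = c • jvf F V0 V1 f0 f1 u v := by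
  ext
  · simp [jvf, mul_add, mul_left_comm]
  · simp [jvf, smul_smul, mul_comm]
  · simp [jvf, smul_smul, mul_comm]

theorem fst_eq_of_jvf_eq_smul {e : F × V0 × V1} {x : V0 × V1} {c : F} (hx : x ≠ 0)
    (hex : jvf F V0 V1 f0 f1 e (0, x) = c • (0, x)) : e.1 = c := by
  have hsmul : e.1 • x = c • x := by
    simpa [snd_jvf] using congrArg Prod.snd hex
  exact smul_left_injective F hx hsmul

theorem snd_add_snd_eq_zero_of_jvf_eq_zero {u v : F × V0 × V1} (hfst : u.1 = v.1)
    (hv : v.1 ≠ 0) (huv : jvf F V0 V1 f0 f1 u v = 0) : u.2 + v.2 = 0 := by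
  have hsmul : v.1 • (u.2 + v.2) = 0 := by
    rw [smul_add, add_comm]
    simpa only [snd_jvf, hfst, Prod.snd_zero] using congrArg Prod.snd huv
  exact (smul_eq_zero.mp hsmul).resolve_left hv

theorem eq_zero_of_add_eq_zero_of_add_smul_eq_zero {M : Type*} [AddCommGroup M] [Module F M]
    {t : F} (ht : t ≠ 1) {v w : M} (hadd : v + w = 0) (hadd_smul : v + t • w = 0) : v = 0 := by
  have hsmul : (1 - t) • v = 0 := by
    calc (1 - t) • v = (v + t • w) - t • (v + w) := by module
      _ = 0 := by rw [hadd, hadd_smul, smul_zero, sub_zero]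
  exact (smul_eq_zero.mp hsmul).resolve_left (sub_ne_zero.mpr ht.symm)

theorem fst_eq_zero_or_one_of_jvf_self {e : F × V0 × V1} (hsnd : e.2 = 0)
    (he : jvf F V0 V1 f0 f1 e e = e) : e.1 = 0 ∨ e.1 = 1 := by
  have hidem : IsIdempotentElem e.1 :=
    (fst_jvf_of_snd_eq_zero hsnd e).symm.trans (congrArg Prod.fst he)
  exact IsIdempotentElem.iff_eq_zero_or_one.mp hidem

theorem eq_zero_of_jvf_self_of_jvf_eq_zero_of_add_smul_eq_zero {e₁ e₂ : F × V0 × V1} {t : F}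
    (he₁ : jvf F V0 V1 f0 f1 e₁ e₁ = e₁) (horth : jvf F V0 V1 f0 f1 e₁ e₂ = 0)
    (hadd : e₁ + t • e₂ = 0) : e₁ = 0 := by
  have he₁_eq : e₁ = -t • e₂ := by rw [neg_smul, eq_neg_of_add_eq_zero_left hadd]
  calc e₁ = jvf F V0 V1 f0 f1 e₁ e₁ := he₁.symm
    _ = jvf F V0 V1 f0 f1 e₁ (-t • e₂) := congrArg _ he₁_eq
    _ = 0 := by rw [jvf_smul, horth, smul_zero]

theorem no_Dt_in_JVf_general [NeZero (2 : F)] {t : F} (ht : t ≠ 1) :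
    ¬ ∃ (e₁ e₂ : F × V0 × V1) (x y : V0 × V1),
        e₁ ≠ 0 ∧
        jvf F V0 V1 f0 f1 e₁ e₁ = e₁ ∧
        jvf F V0 V1 f0 f1 e₁ e₂ = 0 ∧
        jvf F V0 V1 f0 f1 e₁ (0, x) = (2 : F)⁻¹ • (0, x) ∧
        jvf F V0 V1 f0 f1 e₂ (0, x) = (2 : F)⁻¹ • (0, x) ∧
        jvf F V0 V1 f0 f1 (0, x) (0, y) = e₁ + t • e₂ := by
  rintro ⟨e₁, e₂, x, y, he₁_ne, he₁, horth, he₁x, he₂x, hxy⟩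
  have hhalf : (2 : F)⁻¹ ≠ 0 := inv_ne_zero two_ne_zero
  rcases eq_or_ne x 0 with rfl | hx
  · have hadd : e₁ + t • e₂ = 0 := hxy.symm.trans (zero_jvf _)
    exact he₁_ne (eq_zero_of_jvf_self_of_jvf_eq_zero_of_add_smul_eq_zero he₁ horth hadd)
  · have hfst₁ : e₁.1 = 2⁻¹ := fst_eq_of_jvf_eq_smul hx he₁x
    have hfst₂ : e₂.1 = 2⁻¹ := fst_eq_of_jvf_eq_smul hx he₂x
    have hsnd_add : e₁.2 + e₂.2 = 0 :=
      snd_add_snd_eq_zero_of_jvf_eq_zero (hfst₁.trans hfst₂.symm) (hfst₂ ▸ hhalf) horth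
    have hsnd_add_smul : e₁.2 + t • e₂.2 = 0 := by
      simpa [snd_jvf] using (congrArg Prod.snd hxy).symm
    have hsnd : e₁.2 = 0 :=
      eq_zero_of_add_eq_zero_of_add_smul_eq_zero ht hsnd_add hsnd_add_smul
    rcases fst_eq_zero_or_one_of_jvf_self hsnd he₁ with hzero | hone
    · exact hhalf (hfst₁.symm.trans hzero)
    · have htwo : (2 : F) = 1 := inv_eq_one.mp (hfst₁.symm.trans hone)
      exact one_ne_zero (by linear_combination htwo : (1 : F) = 0)

end

/-- for `t ≠ 1`, `J(V,f)` contains no copy of the superalgebra `D_t`: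
there are no nonzero even orthogonal idempotents `e₁, e₂` and odd elements `x, y` with
`eᵢ∘x = x/2`, `eᵢ∘y = y/2` (`i = 1,2`) and `x∘y = e₁ + t·e₂`. -/
theorem no_Dt_in_JVf
    (F : Type*) [Field F] [CharZero F]
    (V0 V1 : Type*) [AddCommGroup V0] [Module F V0] [FiniteDimensional F V0]
    [AddCommGroup V1] [Module F V1] [FiniteDimensional F V1]
    (f0 : V0 →ₗ[F] V0 →ₗ[F] F) (hf0s : f0.IsSymm) (hf0n : f0.SeparatingLeft)
    (f1 : V1 →ₗ[F] V1 →ₗ[F] F) (hf1a : f1.IsAlt) (hf1n : f1.SeparatingLeft)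
    (t : F) (ht : t ≠ 1) :
    ¬ ∃ (α₁ α₂ : F) (v₁ v₂ : V0) (x y : V1),
        ((α₁, v₁, (0 : V1)) : F × V0 × V1) ≠ 0 ∧
        ((α₂, v₂, (0 : V1)) : F × V0 × V1) ≠ 0 ∧
        jvf F V0 V1 f0 f1 (α₁, v₁, 0) (α₁, v₁, 0) = (α₁, v₁, 0) ∧
        jvf F V0 V1 f0 f1 (α₂, v₂, 0) (α₂, v₂, 0) = (α₂, v₂, 0) ∧
        jvf F V0 V1 f0 f1 (α₁, v₁, 0) (α₂, v₂, 0) = 0 ∧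
        jvf F V0 V1 f0 f1 (α₁, v₁, 0) (0, 0, x) = ((0 : F), (0 : V0), (2 : F)⁻¹ • x) ∧
        jvf F V0 V1 f0 f1 (α₂, v₂, 0) (0, 0, x) = ((0 : F), (0 : V0), (2 : F)⁻¹ • x) ∧
        jvf F V0 V1 f0 f1 (α₁, v₁, 0) (0, 0, y) = ((0 : F), (0 : V0), (2 : F)⁻¹ • y) ∧
        jvf F V0 V1 f0 f1 (α₂, v₂, 0) (0, 0, y) = ((0 : F), (0 : V0), (2 : F)⁻¹ • y) ∧
        jvf F V0 V1 f0 f1 (0, 0, x) (0, 0, y) =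
          (α₁, v₁, (0 : V1)) + t • (α₂, v₂, (0 : V1)) := by
  rintro ⟨α₁, α₂, v₁, v₂, x, y, he₁_ne, -, he₁, -, horth, he₁x, he₂x, -, -, hxy⟩
  exact no_Dt_in_JVf_general ht
    ⟨(α₁, v₁, 0), (α₂, v₂, 0), (0, x), (0, y), he₁_ne, he₁, horth, by simpa, by simpa, hxy⟩

end JVF
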